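/- Let i, j ≥ 1 be integers with i + j odd and i < j. Then every complex root of the polynomial Z_i·Z_j + 1 is real if and only if i = j − 1. Moreover, when i = j − 1: (Z_i·Z_j + 1) composed with X² equals P_{i+j}² as real polynomials (i.e. Z_i(x²)·Z_j(x²) + 1 = P_{i+j}(x)² for all x), and Z_i·Z_j + 1 factors completely over ℝ as Π_{k=1}^{2j−1} (X − 4·cos²(πk/(2j))). -/

import Mathlib

open Polynomial Real

/-- The polynomial sequence `Z`: `Z 0 = 1`, `Z 1 = X - 1`,
`Z n = (X - 2) * Z (n-1) - Z (n-2)` for `n ≥ 2`. -/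
noncomputable def Z : ℕ → Polynomial ℝ
  | 0 => 1
  | 1 => X - 1
  | n + 2 => (X - 2) * Z (n + 1) - Z n

/-- The Chebyshev polynomial of the second kind rescaled to `(-2, 2)`:
`P n (x) = U n (x / 2)`. -/
noncomputable def P (n : ℕ) : Polynomial ℝ :=
  (Polynomial.Chebyshev.U ℝ n).comp (Polynomial.C 2⁻¹ * X)

/-- Evaluation of `Z n` at `4 sin² ε`. -/
theorem Z_eval_sin (ε : ℝ) (n : ℕ) :
    (Z n).eval (4 * sin ε ^ 2) * cos ε = (-1) ^ n * cos ((2 * n + 1) * ε) := by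
  induction n using Nat.twoStepInduction with
  | zero => simp [Z]
  | one =>
    have h : cos ((2 * ((1 : ℕ) : ℝ) + 1) * ε) = 4 * cos ε ^ 3 - 3 * cos ε := by
      rw [← cos_three_mul]; norm_num
    rw [h]
    simp only [Z, eval_sub, eval_X, eval_one]
    rw [sin_sq]; ring
  | more n h0 h1 =>
    have e : cos ((2 * ((n + 2 : ℕ) : ℝ) + 1) * ε)
        = 2 * cos (2 * ε) * cos ((2 * ((n + 1 : ℕ) : ℝ) + 1) * ε) - cos ((2 * (n : ℝ) + 1) * ε) := by
      have a1 : (2 * ((n + 2 : ℕ) : ℝ) + 1) * ε = (2 * ((n + 1 : ℕ) : ℝ) + 1) * ε + 2 * ε := by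
        push_cast; ring
      have a2 : (2 * (n : ℝ) + 1) * ε = (2 * ((n + 1 : ℕ) : ℝ) + 1) * ε - 2 * ε := by
        push_cast; ring
      rw [a1, a2, cos_add, cos_sub]; ring
    rw [e]
    simp only [Z, eval_sub, eval_mul, eval_X, eval_ofNat]
    have c : (4 * sin ε ^ 2 - 2) = - 2 * cos (2 * ε) := by rw [cos_two_mul, sin_sq]; ring
    rw [c, sub_mul, mul_assoc, h1, h0]
    ring

/-- Evaluation of `Z n` at `4 cos² θ`. -/
theorem Z_eval_cos (θ : ℝ) (n : ℕ) :
    (Z n).eval (4 * cos θ ^ 2) * sin θ = sin ((2 * n + 1) * θ) := by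
  induction n using Nat.twoStepInduction with
  | zero => simp [Z]
  | one =>
    have h : sin ((2 * ((1 : ℕ) : ℝ) + 1) * θ) = 3 * sin θ - 4 * sin θ ^ 3 := by
      rw [← sin_three_mul]; norm_num
    rw [h]
    simp only [Z, eval_sub, eval_X, eval_one]
    rw [cos_sq']; ring
  | more n h0 h1 =>
    have e : sin ((2 * ((n + 2 : ℕ) : ℝ) + 1) * θ)
        = 2 * cos (2 * θ) * sin ((2 * ((n + 1 : ℕ) : ℝ) + 1) * θ) - sin ((2 * (n : ℝ) + 1) * θ) := by
      have a1 : (2 * ((n + 2 : ℕ) : ℝ) + 1) * θ = (2 * ((n + 1 : ℕ) : ℝ) + 1) * θ + 2 * θ := by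
        push_cast; ring
      have a2 : (2 * (n : ℝ) + 1) * θ = (2 * ((n + 1 : ℕ) : ℝ) + 1) * θ - 2 * θ := by
        push_cast; ring
      rw [a1, a2, sin_add, sin_sub]; ring
    rw [e]
    simp only [Z, eval_sub, eval_mul, eval_X, eval_ofNat]
    have c : (4 * cos θ ^ 2 - 2) = 2 * cos (2 * θ) := by rw [cos_two_mul]; ring
    rw [c, sub_mul, mul_assoc, h1, h0]

theorem P_eval_cos (θ : ℝ) (n : ℕ) :
    (P n).eval (2 * cos θ) * sin θ = sin ((n + 1) * θ) := by
  have := Polynomial.Chebyshev.U_real_cos θ n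
  simp only [P, eval_comp, eval_mul, eval_C, eval_X, inv_mul_cancel_left₀ (two_ne_zero (α := ℝ))]
  rw [this]; norm_num

theorem exists_angle {x : ℝ} (hx : x ∈ Set.Ioo (-2 : ℝ) 2) :
    ∃ θ, x = 2 * cos θ ∧ sin θ ≠ 0 := by
  refine ⟨arccos (x / 2), ?_, ?_⟩
  · rw [cos_arccos (by linarith [hx.1]) (by linarith [hx.2])]; ring
  · rw [sin_arccos]
    apply ne_of_gt
    apply sqrt_pos.2
    nlinarith [hx.1, hx.2]

theorem ZZ_eval_sq (i : ℕ) {x : ℝ} (hx : x ∈ Set.Ioo (-2 : ℝ) 2) :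
    (Z i * Z (i + 1) + 1).eval (x ^ 2) = (P (i + (i + 1))).eval x ^ 2 := by
  obtain ⟨θ, rfl, hs⟩ := exists_angle hx
  have h1 := Z_eval_cos θ i
  have h2 := Z_eval_cos θ (i + 1)
  have h3 := P_eval_cos θ (i + (i + 1))
  have e : (2 * cos θ) ^ 2 = 4 * cos θ ^ 2 := by ring
  rw [e]
  apply mul_right_cancel₀ (pow_ne_zero 2 hs)
  simp only [eval_add, eval_mul, eval_one]
  rw [← mul_pow, h3]
  have : (eval (4 * cos θ ^ 2) (Z i) * eval (4 * cos θ ^ 2) (Z (i + 1)) + 1) * sin θ ^ 2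
    = (eval (4 * cos θ ^ 2) (Z i) * sin θ) * (eval (4 * cos θ ^ 2) (Z (i + 1)) * sin θ)
      + sin θ ^ 2 := by ring
  rw [this, h1, h2]
  set A : ℝ := (((i + (i + 1) : ℕ) : ℝ) + 1) * θ with hA
  have e1 : (2 * (i : ℝ) + 1) * θ = A - θ := by rw [hA]; push_cast; ring
  have e2 : (2 * ((i + 1 : ℕ) : ℝ) + 1) * θ = A + θ := by rw [hA]; push_cast; ring
  rw [e1, e2, sin_add, sin_sub]
  have s1 := sin_sq_add_cos_sq θ
  have s2 := sin_sq_add_cos_sq A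
  linear_combination (sin A ^ 2) * s1 - sin θ ^ 2 * s2

theorem comp_sq_eq (i : ℕ) :
    (Z i * Z (i + 1) + 1).comp (X ^ 2) = P (i + (i + 1)) ^ 2 := by
  apply Polynomial.eq_of_infinite_eval_eq
  refine Set.Infinite.mono ?_ (Set.Ioo_infinite (show (-2 : ℝ) < 2 by norm_num))
  intro x hx
  simp only [Set.mem_ofPred_eq, eval_comp, eval_pow, eval_X]
  exact ZZ_eval_sq i hx

theorem P_eval_prod (n : ℕ) (y : ℝ) :
    (P n).eval y = ∏ k ∈ Finset.range n, (y - 2 * cos ((k + 1) * π / (n + 1))) := by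
  have hroots := Polynomial.Chebyshev.roots_U_real n
  have hmap : (Polynomial.Chebyshev.U ℝ n).roots =
      Multiset.map (fun k : ℕ ↦ cos ((k + 1) * π / (n + 1))) (.range n) := by
    rw [hroots, Finset.image_val_of_injOn
      ((Finset.range n).nodup_map_iff_injOn.mp (Polynomial.Chebyshev.roots_U_real_nodup n))]
    rfl
  have hcard : Multiset.card (Polynomial.Chebyshev.U ℝ n).roots
      = (Polynomial.Chebyshev.U ℝ n).natDegree := by
    rw [hmap, Polynomial.Chebyshev.natDegree_U_natCast]; simp
  have hprod := C_leadingCoeff_mul_prod_multiset_X_sub_C hcard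
  rw [hmap, Polynomial.Chebyshev.leadingCoeff_U_natCast, Multiset.map_map] at hprod
  have hprod' : Polynomial.C (2 ^ n : ℝ) *
      ∏ k ∈ Finset.range n, (X - Polynomial.C (cos ((k + 1) * π / (n + 1))))
      = Polynomial.Chebyshev.U ℝ n := hprod
  rw [P, eval_comp, ← hprod']
  simp only [eval_mul, eval_C, eval_X, eval_prod, eval_sub]
  nth_rewrite 1 [← Finset.card_range n]
  rw [← Finset.prod_const, ← Finset.prod_mul_distrib]
  apply Finset.prod_congr rfl
  intro k _
  ring

theorem P_sq_prod (j : ℕ) (hj : 1 ≤ j) (y : ℝ) :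
    (P (2 * j - 1)).eval y ^ 2 = ∏ k ∈ Finset.Icc 1 (2 * j - 1),
        (y ^ 2 - 4 * cos (π * k / (2 * j)) ^ 2) := by
  have hj0 : (j : ℝ) ≠ 0 := by positivity
  have h1 : (P (2 * j - 1)).eval y = ∏ k ∈ Finset.Icc 1 (2 * j - 1),
      (y - 2 * cos (π * k / (2 * j))) := by
    rw [P_eval_prod]
    refine Finset.prod_nbij' (fun k ↦ k + 1) (fun k ↦ k - 1) ?_ ?_ ?_ ?_ ?_
    · intro k hk; simp at hk ⊢; omega
    · intro k hk; simp at hk ⊢; omega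
    · intro k hk; simp
    · intro k hk; simp at hk ⊢; omega
    · intro k hk
      have : (((2 * j - 1 : ℕ) : ℝ) + 1) = 2 * j := by
        rw [Nat.cast_sub (by omega)]; push_cast; ring
      rw [this]; push_cast
      rw [mul_comm π]
  have h2 : (P (2 * j - 1)).eval y = ∏ k ∈ Finset.Icc 1 (2 * j - 1),
      (y + 2 * cos (π * k / (2 * j))) := by
    rw [h1]
    refine Finset.prod_nbij' (fun k ↦ 2 * j - k) (fun k ↦ 2 * j - k) ?_ ?_ ?_ ?_ ?_
    · intro k hk; simp at hk ⊢; omega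
    · intro k hk; simp at hk ⊢; omega
    · intro k hk; simp at hk ⊢; omega
    · intro k hk; simp at hk ⊢; omega
    · intro k hk
      simp at hk
      have : π * ((2 * j - k : ℕ) : ℝ) / (2 * j) = π - π * k / (2 * j) := by
        rw [Nat.cast_sub (by omega)]; push_cast; field_simp
      rw [this, cos_pi_sub]; ring
  rw [sq]
  nth_rewrite 1 [h1]
  rw [h2, ← Finset.prod_mul_distrib]
  apply Finset.prod_congr rfl
  intro k _
  ring

theorem ZZ_factor (i : ℕ) :
    Z i * Z (i + 1) + 1 = ∏ k ∈ Finset.Icc 1 (2 * (i + 1) - 1),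
        (X - Polynomial.C (4 * Real.cos (π * k / (2 * ((i + 1 : ℕ) : ℝ))) ^ 2)) := by
  apply Polynomial.eq_of_infinite_eval_eq
  refine Set.Infinite.mono ?_ (Set.Ioo_infinite (show (0 : ℝ) < 4 by norm_num))
  intro x hx
  have hs : √x ^ 2 = x := sq_sqrt hx.1.le
  have hr : √x ∈ Set.Ioo (-2 : ℝ) 2 := by
    constructor <;> nlinarith [hx.1, hx.2, sqrt_nonneg x]
  have := ZZ_eval_sq i hr
  have e : i + (i + 1) = 2 * (i + 1) - 1 := by omega
  rw [e, P_sq_prod (i + 1) (by omega), hs] at this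
  simp only [Set.mem_ofPred_eq]
  rw [this, eval_prod]
  simp

theorem log_lemma {a b c t r : ℝ} (hac : a < c) (ht : 0 < t) (ht1 : t < 1)
    (hb : b = t * a + (1 - t) * c) (hr : r < a ∨ c < r) :
    t * log (a - r) + (1 - t) * log (c - r) < log (b - r) := by
  rcases hr with h | h
  · have := strictConcaveOn_log_Ioi.2 (x := a - r) (y := c - r) (by simp; linarith)
      (by simp; linarith) (by linarith) ht (show 0 < 1 - t by linarith) (by ring)
    simp only [smul_eq_mul] at this
    have e : t * (a - r) + (1 - t) * (c - r) = b - r := by rw [hb]; ring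
    rwa [e] at this
  · have := strictConcaveOn_log_Ioi.2 (x := r - a) (y := r - c) (by simp; linarith)
      (by simp; linarith) (by linarith) ht (show 0 < 1 - t by linarith) (by ring)
    simp only [smul_eq_mul] at this
    rw [← log_neg_eq_log (a - r), ← log_neg_eq_log (c - r), ← log_neg_eq_log (b - r)]
    have e : t * (r - a) + (1 - t) * (r - c) = r - b := by rw [hb]; ring
    rw [e] at this
    rwa [neg_sub, neg_sub, neg_sub]

theorem log_prod_lemma {a b c t : ℝ} (hac : a < c) (ht : 0 < t) (ht1 : t < 1)
    (hb : b = t * a + (1 - t) * c) (K : ℝ) (hK : K ≠ 0) (s : Multiset ℝ)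
    (hs : ∀ r ∈ s, r < a ∨ c < r) :
    let F : ℝ → ℝ := fun x ↦ K * (s.map (fun r ↦ x - r)).prod
    F a ≠ 0 ∧ F b ≠ 0 ∧ F c ≠ 0 ∧
    (t * log (F a) + (1 - t) * log (F c) ≤ log (F b)) ∧
    (s ≠ 0 → t * log (F a) + (1 - t) * log (F c) < log (F b)) := by
  induction s using Multiset.induction with
  | empty =>
    simp [hK]
    linarith
  | cons r s ih =>
    obtain ⟨ha, hb', hc, hle, -⟩ := ih (fun q hq ↦ hs q (Multiset.mem_cons_of_mem hq))
    have hr := hs r (Multiset.mem_cons_self r s)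
    have hl := log_lemma hac ht ht1 hb hr
    have hab : a < b := by rw [hb]; nlinarith
    have hbc : b < c := by rw [hb]; nlinarith
    have na : a - r ≠ 0 := by rcases hr with h | h <;> intro h' <;> linarith
    have nb : b - r ≠ 0 := by rcases hr with h | h <;> intro h' <;> linarith
    have nc : c - r ≠ 0 := by rcases hr with h | h <;> intro h' <;> linarith
    have key : ∀ x, K * ((r ::ₘ s).map (fun r ↦ x - r)).prod
        = (x - r) * (K * (s.map (fun r ↦ x - r)).prod) := by
      intro x; rw [Multiset.map_cons, Multiset.prod_cons]; ring
    simp only [key]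
    rw [log_mul na ha, log_mul nb hb', log_mul nc hc]
    refine ⟨mul_ne_zero na ha, mul_ne_zero nb hb', mul_ne_zero nc hc, ?_, fun _ ↦ ?_⟩
    · linarith
    · linarith

/-- A real-rooted nonconstant polynomial has no positive valley. -/
theorem no_valley (f : ℝ[X]) (hf : ∀ z : ℂ, (Polynomial.aeval z) f = 0 → z.im = 0)
    (r0 : ℝ) (hr0 : f.eval r0 = 0) {a b c : ℝ} (hab : a < b) (hbc : b < c)
    (hpos : ∀ x ∈ Set.Icc a c, 0 < f.eval x)
    (ha : 1 ≤ f.eval a) (hb : f.eval b ≤ 1) (hc : 1 ≤ f.eval c) : False := by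
  have f0 : f ≠ 0 := by rintro rfl; simp at ha; linarith
  have hsp : f.Splits := by
    refine Polynomial.Splits.of_splits_map (algebraMap ℝ ℂ) (IsAlgClosed.splits _) ?_
    intro z hz
    have h0 : z.im = 0 := by
      apply hf
      rw [mem_roots', IsRoot.def, eval_map_algebraMap] at hz
      exact hz.2
    exact ⟨z.re, by apply Complex.ext <;> simp [h0]⟩
  have hcb : 0 < c - a := by linarith
  have h := log_prod_lemma (a := a) (b := b) (c := c) (t := (c - b) / (c - a)) (by linarith)
    (div_pos (by linarith) hcb) ((div_lt_one hcb).2 (by linarith)) (by field_simp; ring)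
    f.leadingCoeff (leadingCoeff_ne_zero.2 f0) f.roots (by
      intro r hr
      by_contra hcon
      push Not at hcon
      have := hpos r ⟨hcon.1, hcon.2⟩
      rw [mem_roots', IsRoot.def] at hr
      linarith [hr.2])
  simp only [← hsp.eval_eq_prod_roots] at h
  have h5 := h.2.2.2.2 (by
    intro h0
    have : r0 ∈ f.roots := by rw [mem_roots', IsRoot.def]; exact ⟨f0, hr0⟩
    rw [h0] at this
    simp at this)
  have l1 := log_nonneg ha
  have l2 := log_nonneg hc
  have l3 := log_nonpos (hpos b ⟨hab.le, hbc.le⟩).le hb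
  have t0 : 0 ≤ (c - b) / (c - a) := div_nonneg (by linarith) hcb.le
  have t1 : 0 ≤ 1 - (c - b) / (c - a) := by
    have := (div_le_one hcb).2 (show c - b ≤ c - a by linarith)
    linarith
  nlinarith [mul_nonneg t0 l1, mul_nonneg t1 l2]

theorem ZZ_eval_sin (i j : ℕ) (hpar : Odd (i + j)) (ε : ℝ) :
    (Z i * Z j + 1).eval (4 * sin ε ^ 2) * cos ε ^ 2
      = cos ε ^ 2 - cos ((2 * i + 1) * ε) * cos ((2 * j + 1) * ε) := by
  have h1 := Z_eval_sin ε i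
  have h2 := Z_eval_sin ε j
  have h3 : ((-1 : ℝ)) ^ i * (-1) ^ j = -1 := by rw [← pow_add]; exact hpar.neg_one_pow
  simp only [eval_add, eval_mul, eval_one]
  calc _ = (eval (4 * sin ε ^ 2) (Z i) * cos ε) * (eval (4 * sin ε ^ 2) (Z j) * cos ε)
        + cos ε ^ 2 := by ring
    _ = _ := by
      rw [h1, h2]
      linear_combination (cos ((2 * i + 1) * ε) * cos ((2 * j + 1) * ε)) * h3

theorem trig_pos (i d N : ℝ) (hi : 1 ≤ i) (hd : 3 ≤ d) (hN : N = 2 * i + d + 1) (ε : ℝ)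
    (h0 : 0 < ε) (h2 : N * ε ≤ 3 * π / 2) :
    sin ε ^ 2 < sin (N * ε) ^ 2 + sin (d * ε) ^ 2 := by
  have hpi := pi_pos
  have hε : 6 * ε ≤ 3 * π / 2 := by nlinarith
  have hs : 0 < sin ε := sin_pos_of_pos_of_lt_pi h0 (by linarith)
  have hde : 3 * ε ≤ d * ε := by nlinarith
  have hie : ε ≤ i * ε := by nlinarith
  have hNe : N * ε = 2 * (i * ε) + d * ε + ε := by rw [hN]; ring
  have mono : ∀ u, ε < u → u < π - ε → sin ε < sin u := by
    intro u hu1 hu2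
    by_cases hu : u ≤ π / 2
    · exact sin_lt_sin_of_lt_of_le_pi_div_two (by linarith) hu hu1
    · rw [← sin_pi_sub u]
      exact sin_lt_sin_of_lt_of_le_pi_div_two (by linarith) (by linarith) (by linarith)
  by_cases h : d * ε < π - ε
  · have := mono (d * ε) (by linarith) h
    nlinarith [sq_nonneg (sin (N * ε))]
  · have := mono (N * ε - π) (by linarith) (by linarith)
    rw [sin_sub_pi] at this
    nlinarith [sq_nonneg (sin (d * ε))]

theorem not_real_rooted (i j : ℕ) (hi : 1 ≤ i) (hpar : Odd (i + j)) (hij : i + 3 ≤ j)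
    (hf : ∀ z : ℂ, (Polynomial.aeval z) (Z i * Z j + 1) = 0 → z.im = 0) : False := by
  have hpi := pi_pos
  have hiR : (1 : ℝ) ≤ i := by exact_mod_cast hi
  have hjR : (i : ℝ) + 3 ≤ j := by exact_mod_cast hij
  set N : ℝ := i + j + 1 with hN
  have hN6 : 6 ≤ N := by linarith
  have hNpos : 0 < N := by linarith
  set α : ℝ := π / (2 * N) with hα
  have hNα : 2 * (N * α) = π := by rw [hα]; field_simp
  have hα0 : 0 < α := by positivity
  have h6 : 12 * α ≤ π := by nlinarith
  have cpos : ∀ ε ∈ Set.Icc α (3 * α), 0 < cos ε := by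
    intro ε hε
    exact cos_pos_of_mem_Ioo ⟨by linarith [hε.1], by linarith [hε.2]⟩
  have smono : ∀ u v, 0 ≤ u → u < v → v ≤ 3 * α → 4 * sin u ^ 2 < 4 * sin v ^ 2 := by
    intro u v hu huv hv
    have h1 := sin_lt_sin_of_lt_of_le_pi_div_two (by linarith) (by linarith) huv
    have h2 : 0 ≤ sin u := sin_nonneg_of_nonneg_of_le_pi hu (by linarith)
    nlinarith
  have sumang : ∀ ε, (2 * (j : ℝ) + 1) * ε = 2 * (N * ε) - (2 * i + 1) * ε := by
    intro ε; rw [hN]; ring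
  have e1 := ZZ_eval_sin i j hpar α
  have e2 := ZZ_eval_sin i j hpar (2 * α)
  have e3 := ZZ_eval_sin i j hpar (3 * α)
  rw [sumang, hNα, cos_pi_sub] at e1
  rw [sumang, show 2 * (N * (2 * α)) = 2 * π by linarith, cos_two_pi_sub] at e2
  rw [sumang, show 2 * (N * (3 * α)) - (2 * i + 1) * (3 * α)
    = (π - (2 * i + 1) * (3 * α)) + 2 * π by linarith, cos_add_two_pi, cos_pi_sub] at e3
  have c1 := pow_pos (cpos α ⟨le_rfl, by linarith⟩) 2
  have c2 := pow_pos (cpos (2 * α) ⟨by linarith, by linarith⟩) 2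
  have c3 := pow_pos (cpos (3 * α) ⟨by linarith, by linarith⟩) 2
  refine no_valley (Z i * Z j + 1) hf 0 ?_ (smono α (2 * α) hα0.le (by linarith) (by linarith))
    (smono (2 * α) (3 * α) (by linarith) (by linarith) le_rfl) ?_ ?_ ?_ ?_
  · have := ZZ_eval_sin i j hpar 0
    simpa using this
  · intro x hx
    have hcont : ContinuousOn (fun ε : ℝ ↦ 4 * sin ε ^ 2) (Set.Icc α (3 * α)) := by fun_prop
    obtain ⟨ε, hε, rfl⟩ := intermediate_value_Icc (by linarith) hcont hx
    have hc := pow_pos (cpos ε hε) 2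
    have he := ZZ_eval_sin i j hpar ε
    have ht := trig_pos i (j - i) N hiR (by linarith) (by rw [hN]; ring) ε (by linarith [hε.1])
      (by nlinarith [hε.2])
    have a1 : (2 * (i : ℝ) + 1) * ε = N * ε - (j - i) * ε := by rw [hN]; ring
    have a2 : (2 * (j : ℝ) + 1) * ε = N * ε + (j - i) * ε := by rw [hN]; ring
    rw [a1, a2, cos_add, cos_sub] at he
    have s1 := sin_sq_add_cos_sq (N * ε)
    have s2 := sin_sq_add_cos_sq ((j - i) * ε)
    have s3 := sin_sq_add_cos_sq ε
    have : 0 < eval (4 * sin ε ^ 2) (Z i * Z j + 1) * cos ε ^ 2 := by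
      have : eval (4 * sin ε ^ 2) (Z i * Z j + 1) * cos ε ^ 2
          = sin (N * ε) ^ 2 + sin ((j - i) * ε) ^ 2 - sin ε ^ 2 := by
        rw [he]
        linear_combination s3 - sin ((j - i) * ε) ^ 2 * s1 - s2 - (cos (N * ε) ^ 2 - 1) * s2
          + (2 * sin ((j - i) * ε) ^ 2 - 1) * s1
      linarith
    exact pos_of_mul_pos_left this hc.le
  · nlinarith [sq_nonneg (cos ((2 * i + 1) * α))]
  · nlinarith [sq_nonneg (cos ((2 * i + 1) * (2 * α)))]
  · nlinarith [sq_nonneg (cos ((2 * i + 1) * (3 * α)))]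

theorem ZZ_add_one_real_roots_iff (i j : ℕ) (hi : 1 ≤ i) (hj : 1 ≤ j)
    (hpar : Odd (i + j)) (hij : i < j) :
    ((∀ z : ℂ, (Polynomial.aeval z) (Z i * Z j + 1) = 0 → z.im = 0) ↔ i = j - 1) ∧
    (i = j - 1 →
      (Z i * Z j + 1).comp (X ^ 2) = P (i + j) ^ 2 ∧
      Z i * Z j + 1 = ∏ k ∈ Finset.Icc 1 (2 * j - 1),
        (X - Polynomial.C (4 * Real.cos (π * k / (2 * j)) ^ 2))) := by
  have hsub : ∀ h : i = j - 1, j = i + 1 := fun h ↦ by omega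
  refine ⟨⟨fun hf ↦ ?_, fun h z hz ↦ ?_⟩, fun h ↦ ?_⟩
  · by_contra hne
    obtain ⟨m, hm⟩ := hpar
    exact not_real_rooted i j hi ⟨m, hm⟩ (by omega) hf
  · obtain rfl := hsub h
    rw [ZZ_factor, map_prod, Finset.prod_eq_zero_iff] at hz
    obtain ⟨k, -, hk⟩ := hz
    rw [map_sub, aeval_X, aeval_C, sub_eq_zero] at hk
    rw [hk]
    exact Complex.ofReal_im _
  · obtain rfl := hsub h
    exact ⟨comp_sq_eq i, ZZ_factor i⟩
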